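/- arXiv:1912.00825 — 2 statements merged into one kernel-verified Lean document; each statement's English description precedes it below -/
import Mathlib

section
/- Let V be a real inner product space, let u_1, …, u_N ∈ V, let C ∈ ℝ^{N×N} be the correlation matrix C_{ij} = ⟨u_i, u_j⟩, and let λ_1 ≥ λ_2 ≥ … ≥ λ_N ≥ 0 be the eigenvalues of C (counted with multiplicity). Then for every r with 1 ≤ r ≤ N and every orthonormal family φ_1, …, φ_r in V, the total squared projection error satisfies Σ_{n=1}^N ‖u_n − Σ_{i=1}^r ⟨u_n, φ_i⟩ φ_i‖² ≥ Σ_{k=r+1}^N λ_k. -/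
/-!
Rotate the snapshots by the eigenbasis: `w k = ∑ n, e k n • u n`. These vectors satisfy
`⟪w j, w k⟫ = lam k` if `j = k` and `0` otherwise, and since `e` is an orthogonal matrix, the
rotation preserves sums of squares (`sum_norm_sq_rotate`). As the projection error of `u n` is
`‖u n‖² - ∑ i, ⟪u n, φ i⟫²`, the total error equals `∑ k, (lam k - ∑ i, ⟪w k, φ i⟫²)`.

Write `∑ i, ⟪w k, φ i⟫² = lam k * p k`. Bessel's inequality for `φ` gives `p k ≤ 1`, and Bessel's
inequality for the normalized `w` (`bessel_of_orthogonal`) gives `∑ k, p k ≤ r`. With weights in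
`[0, 1]` of total mass at most `r`, the sum `∑ k, lam k * p k` is at most the sum of the `r`
largest `lam k` (`sum_mul_le_sum_largest`).
-/

open scoped RealInnerProductSpace

/-- An orthogonal change of coordinates preserves the sum of the squared norms of a family. -/
lemma sum_norm_sq_rotate {V : Type*} [NormedAddCommGroup V] [InnerProductSpace ℝ V] {N : ℕ}
    (e : Fin N → Fin N → ℝ)
    (he : ∀ i j, ∑ n, e i n * e j n = if i = j then (1 : ℝ) else 0) (x : Fin N → V) :
    ∑ k, ‖∑ n, e k n • x n‖ ^ 2 = ∑ n, ‖x n‖ ^ 2 := by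
  have h1 : Matrix.of e * (Matrix.of e).transpose = 1 := by
    ext i j
    simp [Matrix.mul_apply, Matrix.one_apply, he]
  have h2 : (Matrix.of e).transpose * Matrix.of e = 1 := mul_eq_one_comm.mp h1
  have hcol : ∀ m n, ∑ k, e k m * e k n = if m = n then (1 : ℝ) else 0 := by
    intro m n
    have := congrFun (congrFun h2 m) n
    simpa [Matrix.mul_apply, Matrix.one_apply] using this
  calc ∑ k, ‖∑ n, e k n • x n‖ ^ 2
      = ∑ k, ∑ m, ∑ n, (e k m * e k n) * ⟪x m, x n⟫ := by
        refine Finset.sum_congr rfl fun k _ => ?_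
        rw [← real_inner_self_eq_norm_sq, sum_inner]
        refine Finset.sum_congr rfl fun m _ => ?_
        rw [inner_sum]
        refine Finset.sum_congr rfl fun n _ => ?_
        rw [real_inner_smul_left, real_inner_smul_right, mul_assoc]
    _ = ∑ m, ∑ n, (∑ k, e k m * e k n) * ⟪x m, x n⟫ := by
        rw [Finset.sum_comm]
        refine Finset.sum_congr rfl fun m _ => ?_
        rw [Finset.sum_comm]
        simp only [Finset.sum_mul]
    _ = ∑ n, ‖x n‖ ^ 2 := by
        simp [hcol]

/-- Bessel's inequality for an orthogonal family that is not normalized and may contain zero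
vectors: since `0⁻¹ = 0`, the zero vectors contribute nothing. -/
lemma bessel_of_orthogonal {V : Type*} [NormedAddCommGroup V] [InnerProductSpace ℝ V] {N : ℕ}
    (w : Fin N → V) (lam : Fin N → ℝ)
    (hw : ∀ j k, ⟪w j, w k⟫ = if j = k then lam k else 0) (x : V) :
    ∑ k, (lam k)⁻¹ * ⟪w k, x⟫ ^ 2 ≤ ‖x‖ ^ 2 := by
  set y : V := ∑ k, ((lam k)⁻¹ * ⟪w k, x⟫) • w k with hy
  have hxy : ⟪x, y⟫ = ∑ k, (lam k)⁻¹ * ⟪w k, x⟫ ^ 2 := by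
    rw [hy, inner_sum]
    refine Finset.sum_congr rfl fun k _ => ?_
    rw [real_inner_smul_right, real_inner_comm]
    ring
  have hyy : ‖y‖ ^ 2 = ∑ k, (lam k)⁻¹ * ⟪w k, x⟫ ^ 2 := by
    rw [← real_inner_self_eq_norm_sq]
    conv_lhs => rw [hy]
    rw [sum_inner]
    refine Finset.sum_congr rfl fun k _ => ?_
    rw [inner_sum]
    simp only [real_inner_smul_left, real_inner_smul_right, hw]
    simp only [mul_ite, mul_zero, Finset.sum_ite_eq, Finset.mem_univ, if_true]
    by_cases h : lam k = 0
    · simp [h]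
    · field_simp
  have := norm_sub_sq_real x y
  nlinarith [sq_nonneg ‖x - y‖]

/-- A combination of decreasing values with weights in `[0, 1]` of total mass at most `r` is at
most the sum of the `r` largest values. -/
lemma sum_mul_le_sum_largest {N : ℕ} (lam p : Fin N → ℝ) (hanti : Antitone lam)
    (hnonneg : ∀ k, 0 ≤ lam k) (hp0 : ∀ k, 0 ≤ p k) (hp1 : ∀ k, p k ≤ 1)
    (r : ℕ) (hr : 1 ≤ r) (hrN : r ≤ N) (hp : ∑ k, p k ≤ r) :
    ∑ k, lam k * p k ≤ ∑ k : Fin N, if (k : ℕ) < r then lam k else 0 := by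
  -- The `r`-th largest value serves as threshold (`Fin N` is indexed from zero).
  set t : ℝ := lam ⟨r - 1, by omega⟩ with ht
  have key : ∀ k, lam k * p k ≤
      (if (k : ℕ) < r then lam k else 0) + t * (p k - if (k : ℕ) < r then 1 else 0) := by
    intro k
    split_ifs with h
    · have : t ≤ lam k := hanti (Fin.le_def.mpr (by simp; omega))
      nlinarith [hp1 k]
    · have : lam k ≤ t := hanti (Fin.le_def.mpr (by simp; omega))
      nlinarith [hp0 k]
  have hcard : ∑ k : Fin N, (if (k : ℕ) < r then (1 : ℝ) else 0) = r := by
    rw [Fin.sum_univ_eq_sum_range (fun k => if k < r then (1 : ℝ) else 0) N,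
      ← Finset.sum_filter]
    have : (Finset.range N).filter (· < r) = Finset.range r := by
      ext k
      simp
      omega
    simp [this]
  have hsum := Finset.sum_le_sum fun k (_ : k ∈ Finset.univ) => key k
  rw [Finset.sum_add_distrib, ← Finset.mul_sum, Finset.sum_sub_distrib, hcard] at hsum
  nlinarith [hnonneg ⟨r - 1, by omega⟩]

lemma norm_sub_proj_sq {V : Type*} [NormedAddCommGroup V] [InnerProductSpace ℝ V] {r : ℕ}
    (φ : Fin r → V) (hφ : Orthonormal ℝ φ) (x : V) :
    ‖x - ∑ i, ⟪x, φ i⟫ • φ i‖ ^ 2 = ‖x‖ ^ 2 - ∑ i, ⟪x, φ i⟫ ^ 2 := by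
  have h1 : ⟪x, ∑ i, ⟪x, φ i⟫ • φ i⟫ = ∑ i, ⟪x, φ i⟫ ^ 2 := by
    simp [inner_sum, real_inner_smul_right, sq]
  have h2 : ‖∑ i, ⟪x, φ i⟫ • φ i‖ ^ 2 = ∑ i, ⟪x, φ i⟫ ^ 2 := by
    rw [← real_inner_self_eq_norm_sq, hφ.inner_sum]
    simp [sq]
  rw [norm_sub_sq_real, h1, h2]
  ring

/-- POD optimality, lower bound: if `C` is the correlation (Gram) matrix of snapshots
`u_1, …, u_N` in a real inner product space, with (decreasingly ordered, nonnegative)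
eigenvalues `λ_1 ≥ … ≥ λ_N ≥ 0` realized by an orthonormal eigenbasis of `ℝ^N`, then for
every `r` with `1 ≤ r ≤ N` and every orthonormal family `φ_1, …, φ_r`, the total squared
projection error satisfies
`Σ_n ‖u_n − Σ_i ⟨u_n, φ_i⟩ φ_i‖² ≥ Σ_{k > r} λ_k`. -/
theorem pod_projection_error_lower_bound
    {V : Type*} [NormedAddCommGroup V] [InnerProductSpace ℝ V] {N : ℕ}
    (u : Fin N → V) (C : Matrix (Fin N) (Fin N) ℝ)
    (hC : ∀ i j, C i j = ⟪u i, u j⟫)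
    (lam : Fin N → ℝ) (hlam_anti : Antitone lam) (hlam_nonneg : ∀ k, 0 ≤ lam k)
    (e : Fin N → Fin N → ℝ)
    (he_orth : ∀ i j, ∑ n, e i n * e j n = if i = j then (1 : ℝ) else 0)
    (he_eig : ∀ i, C.mulVec (e i) = lam i • e i) :
    ∀ (r : ℕ), 1 ≤ r → r ≤ N → ∀ (φ : Fin r → V), Orthonormal ℝ φ →
      ∑ k ∈ Finset.univ.filter (fun k : Fin N => r ≤ (k : ℕ)), lam k
        ≤ ∑ n, ‖u n - ∑ i, ⟪u n, φ i⟫ • φ i‖ ^ 2 := by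
  intro r hr hrN φ hφ
  set w : Fin N → V := fun k => ∑ n, e k n • u n with hwdef
  have hw : ∀ j k, ⟪w j, w k⟫ = if j = k then lam k else 0 := by
    intro j k
    calc ⟪w j, w k⟫ = ∑ m, e j m * (C.mulVec (e k)) m := by
          simp only [hwdef, sum_inner]
          refine Finset.sum_congr rfl fun m _ => ?_
          rw [inner_sum, Matrix.mulVec, dotProduct, Finset.mul_sum]
          refine Finset.sum_congr rfl fun n _ => ?_
          rw [real_inner_smul_left, real_inner_smul_right, hC]
          ring
      _ = lam k * ∑ m, e j m * e k m := by
          rw [he_eig, Finset.mul_sum]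
          refine Finset.sum_congr rfl fun m _ => ?_
          simp only [Pi.smul_apply, smul_eq_mul]
          ring
      _ = if j = k then lam k else 0 := by
          rw [he_orth]
          simp
  have hwn : ∀ k, ‖w k‖ ^ 2 = lam k := fun k => by
    rw [← real_inner_self_eq_norm_sq, hw, if_pos rfl]
  have hbessel : ∀ k, ∑ i, ⟪w k, φ i⟫ ^ 2 ≤ lam k := by
    intro k
    have h := norm_sub_proj_sq φ hφ (w k)
    rw [hwn] at h
    nlinarith [sq_nonneg ‖w k - ∑ i, ⟪w k, φ i⟫ • φ i‖]
  set p : Fin N → ℝ := fun k => (lam k)⁻¹ * ∑ i, ⟪w k, φ i⟫ ^ 2 with hpdef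
  have hS0 : ∀ k, 0 ≤ ∑ i, ⟪w k, φ i⟫ ^ 2 := fun k => Finset.sum_nonneg fun i _ => sq_nonneg _
  have hp0 : ∀ k, 0 ≤ p k := fun k => mul_nonneg (inv_nonneg.mpr (hlam_nonneg k)) (hS0 k)
  have hp1 : ∀ k, p k ≤ 1 := fun k =>
    (mul_le_mul_of_nonneg_left (hbessel k) (inv_nonneg.mpr (hlam_nonneg k))).trans
      inv_mul_le_one
  have hlp : ∀ k, lam k * p k = ∑ i, ⟪w k, φ i⟫ ^ 2 := by
    intro k
    by_cases h : lam k = 0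
    -- If `lam k = 0`, Bessel's inequality forces the sum on the right to vanish.
    · have := hbessel k
      rw [h, zero_mul]
      linarith [hS0 k]
    · exact mul_inv_cancel_left₀ h _
  have hp : ∑ k, p k ≤ r := by
    simp only [hpdef, Finset.mul_sum]
    rw [Finset.sum_comm]
    calc ∑ i, ∑ k, (lam k)⁻¹ * ⟪w k, φ i⟫ ^ 2 ≤ ∑ i : Fin r, (1 : ℝ) := by
          refine Finset.sum_le_sum fun i _ => ?_
          have := bessel_of_orthogonal w lam hw (φ i)
          rwa [hφ.1 i, one_pow] at this
      _ = r := by simp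
  have hmain := sum_mul_le_sum_largest lam p hlam_anti hlam_nonneg hp0 hp1 r hr hrN hp
  have hnorm : ∑ n, ‖u n‖ ^ 2 = ∑ k, lam k := by
    rw [← sum_norm_sq_rotate e he_orth u]
    exact Finset.sum_congr rfl fun k _ => hwn k
  have hcoef : ∑ n, ∑ i, ⟪u n, φ i⟫ ^ 2 = ∑ k, lam k * p k := by
    simp only [hlp]
    rw [Finset.sum_comm, Finset.sum_comm (s := Finset.univ (α := Fin N))]
    refine Finset.sum_congr rfl fun i _ => ?_
    have := sum_norm_sq_rotate e he_orth fun n => ⟪u n, φ i⟫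
    simp only [Real.norm_eq_abs, sq_abs] at this
    rw [← this]
    refine Finset.sum_congr rfl fun k _ => ?_
    simp [hwdef, sum_inner, real_inner_smul_left]
  have hsplit : (∑ k : Fin N, if (k : ℕ) < r then lam k else 0)
      + ∑ k ∈ Finset.univ.filter (fun k : Fin N => r ≤ (k : ℕ)), lam k = ∑ k, lam k := by
    rw [Finset.sum_filter, ← Finset.sum_add_distrib]
    refine Finset.sum_congr rfl fun k _ => ?_
    by_cases h : (k : ℕ) < r
    · simp [h]
    · simp [h, not_lt.mp h]
  simp only [norm_sub_proj_sq φ hφ]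
  rw [Finset.sum_sub_distrib, hnorm, hcoef]
  linarith
end

section
/- Let V be a real inner product space, let u_1, …, u_N ∈ V, let C ∈ ℝ^{N×N} be the correlation matrix C_{ij} = ⟨u_i, u_j⟩, and let λ_1 ≥ λ_2 ≥ … ≥ λ_N ≥ 0 be the eigenvalues of C. Fix r with 1 ≤ r ≤ N and λ_r > 0, and let v_1, …, v_r ∈ ℝ^N be orthonormal eigenvectors of C with C v_i = λ_i v_i. Define the POD modes φ_i = λ_i^{−1/2} Σ_{n=1}^N (v_i)_n u_n for i = 1, …, r. Then Σ_{n=1}^N ‖u_n − Σ_{i=1}^r ⟨u_n, φ_i⟩ φ_i‖² = Σ_{k=r+1}^N λ_k; in particular the POD modes achieve the minimum of the total squared projection error over all orthonormal families of size r in V. -/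
/-!
For an orthonormal family `ψ` the total squared projection error is
`∑ₙ ‖uₙ‖² - ∑ᵢ ∑ₙ ⟪uₙ, ψᵢ⟫²`, so the error is governed by the captured energy
`∑ᵢ ∑ₙ ⟪uₙ, ψᵢ⟫²`.

Replace the snapshots by their rotations `wₖ = ∑ₙ (eₖ)ₙ uₙ`. The change of coordinates is orthogonal,
so `∑ₙ ⟪uₙ, x⟫² = ∑ₖ ⟪wₖ, x⟫²`; and since `e` diagonalizes the Gram matrix,
`⟪wₖ, wₗ⟫ = λₖ δₖₗ`. In particular the total energy `∑ₙ ‖uₙ‖²` is the trace `∑ₖ λₖ`.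
The POD modes are orthonormal with `⟪uₙ, φᵢ⟫ = √λᵢ (vᵢ)ₙ`, so they capture exactly
`λ₁ + ⋯ + λᵣ`. For any other orthonormal `ψ`, put `fₖ = λₖ^{-1/2} wₖ`, which is zero when `λₖ = 0`.
The captured energy is `∑ₖ λₖ bₖ` with
`bₖ = ∑ᵢ ⟪fₖ, ψᵢ⟫²`. Bessel's inequality for `ψ` gives `bₖ ≤ 1`, and Bessel's inequality for `f`
gives `∑ₖ bₖ ≤ r`; a weighted sum of a decreasing sequence under these two constraints is at most
the sum of its first `r` terms (`sum_mul_le_sum_first`).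
-/


open scoped RealInnerProductSpace

/-- Expansion of the residual for an orthogonal, not necessarily normalized, family. The weights
`c k = ‖f k‖²` are kept general so that the formula also covers families containing zero vectors. -/
lemma norm_sq_residual {V ι : Type*} [NormedAddCommGroup V] [InnerProductSpace ℝ V]
    [Fintype ι] [DecidableEq ι] (f : ι → V) (c : ι → ℝ)
    (hf : ∀ k l, ⟪f k, f l⟫ = if k = l then c k else 0) (x : V) :
    ‖x - ∑ k, ⟪x, f k⟫ • f k‖ ^ 2
      = ‖x‖ ^ 2 - 2 * ∑ k, ⟪x, f k⟫ ^ 2 + ∑ k, c k * ⟪x, f k⟫ ^ 2 := by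
  rw [norm_sub_sq_real]
  congr 1
  · congr 2
    simp [inner_sum, inner_smul_right, sq]
  · rw [← real_inner_self_eq_norm_sq]
    simp only [inner_sum, sum_inner, inner_smul_right, real_inner_smul_left, hf]
    simp
    exact Finset.sum_congr rfl fun k _ => by ring

lemma bessel_of_orthogonal_s7 {V ι : Type*} [NormedAddCommGroup V] [InnerProductSpace ℝ V]
    [Fintype ι] [DecidableEq ι] (f : ι → V) (c : ι → ℝ) (hc : ∀ k, c k ≤ 1)
    (hf : ∀ k l, ⟪f k, f l⟫ = if k = l then c k else 0) (x : V) :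
    ∑ k, ⟪x, f k⟫ ^ 2 ≤ ‖x‖ ^ 2 := by
  have h := norm_sq_residual f c hf x
  have h0 := sq_nonneg ‖x - ∑ k, ⟪x, f k⟫ • f k‖
  have h1 : ∑ k, c k * ⟪x, f k⟫ ^ 2 ≤ ∑ k, ⟪x, f k⟫ ^ 2 :=
    Finset.sum_le_sum fun k _ => mul_le_of_le_one_left (sq_nonneg _) (hc k)
  linarith

/-- Total squared projection error: total energy minus captured energy. -/
lemma total_error_eq {V : Type*} [NormedAddCommGroup V] [InnerProductSpace ℝ V] {N r : ℕ}
    (u : Fin N → V) (ψ : Fin r → V) (hψ : Orthonormal ℝ ψ) :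
    ∑ n, ‖u n - ∑ i, ⟪u n, ψ i⟫ • ψ i‖ ^ 2
      = ∑ n, ‖u n‖ ^ 2 - ∑ i, ∑ n, ⟪u n, ψ i⟫ ^ 2 := by
  rw [Finset.sum_comm, ← Finset.sum_sub_distrib]
  refine Finset.sum_congr rfl fun n _ => ?_
  rw [norm_sq_residual ψ (fun _ => 1) (fun k l => orthonormal_iff_ite.mp hψ k l)]
  simp only [one_mul]
  ring

/-- A weighted sum of a decreasing nonnegative sequence, with weights at most one and total weight
at most `r`, does not exceed the sum of the first `r` terms. -/
lemma sum_mul_le_sum_first {N r : ℕ} (lam b : Fin N → ℝ) (hanti : Antitone lam)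
    (hr1 : 1 ≤ r) (hrN : r ≤ N) (h0 : ∀ k, 0 ≤ lam k) (hb0 : ∀ k, 0 ≤ b k)
    (hb1 : ∀ k, b k ≤ 1) (hbr : ∑ k, b k ≤ r) :
    ∑ k, lam k * b k ≤ ∑ i, lam (Fin.castLE hrN i) := by
  -- Subtracting the threshold `t`, the last of the first `r` terms, makes every summand of
  -- `(lam k - t) * (b k - 1_{k < r})` nonpositive.
  set t := lam (Fin.castLE hrN ⟨r - 1, by omega⟩) with ht
  have hsum : ∀ g : Fin N → ℝ, ∑ k, g k * (if (k : ℕ) < r then 1 else 0)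
      = ∑ i, g (Fin.castLE hrN i) := by
    intro g
    simp only [mul_ite, mul_one, mul_zero]
    obtain ⟨m, rfl⟩ := Nat.exists_eq_add_of_le hrN
    rw [Fin.sum_univ_add]
    simp
    rfl
  have hone : ∑ k : Fin N, (if (k : ℕ) < r then (1 : ℝ) else 0) = r := by
    simpa using hsum fun _ => 1
  have hle : ∑ k, (lam k - t) * (b k - if (k : ℕ) < r then 1 else 0) ≤ 0 := by
    refine Finset.sum_nonpos fun k _ => ?_
    split_ifs with hk
    · have : t ≤ lam k := hanti (Fin.le_def.mpr (by simp; omega))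
      exact mul_nonpos_of_nonneg_of_nonpos (by linarith) (by linarith [hb1 k])
    · have : lam k ≤ t := hanti (Fin.le_def.mpr (by simp; omega))
      exact mul_nonpos_of_nonpos_of_nonneg (by linarith) (by linarith [hb0 k])
  have hexp : ∑ k, (lam k - t) * (b k - if (k : ℕ) < r then 1 else 0)
      = ∑ k, lam k * b k - ∑ k, lam k * (if (k : ℕ) < r then 1 else 0)
        - t * (∑ k, b k - ∑ k : Fin N, if (k : ℕ) < r then (1 : ℝ) else 0) := by
    rw [← Finset.sum_sub_distrib, ← Finset.sum_sub_distrib, Finset.mul_sum,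
      ← Finset.sum_sub_distrib]
    exact Finset.sum_congr rfl fun k _ => by ring
  rw [hsum, hone] at hexp
  have : t * (∑ k, b k - r) ≤ 0 :=
    mul_nonpos_of_nonneg_of_nonpos (h0 _) (by linarith)
  linarith

/-- An eigenvector `y` of the Gram matrix, read in the snapshot space: the inner products of the
snapshots with `∑ₘ yₘ uₘ` are the entries of the Gram matrix applied to `y`. -/
lemma inner_combination {V : Type*} [NormedAddCommGroup V] [InnerProductSpace ℝ V] {N : ℕ}
    (u : Fin N → V) (C : Matrix (Fin N) (Fin N) ℝ) (hC : ∀ i j, C i j = ⟪u i, u j⟫)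
    (y : Fin N → ℝ) (a : ℝ) (hy : C.mulVec y = a • y) (n : Fin N) :
    ⟪u n, ∑ m, y m • u m⟫ = a * y n := by
  have h := congrFun hy n
  simp only [Matrix.mulVec, dotProduct, hC, Pi.smul_apply, smul_eq_mul] at h
  rw [← h]
  simp only [inner_sum, inner_smul_right]
  exact Finset.sum_congr rfl fun k _ => mul_comm _ _

/-- Orthonormal eigenvectors of the Gram matrix give orthogonal combinations of the snapshots,
with the eigenvalues as squared norms. -/
lemma inner_combination_combination {V ι : Type*} [NormedAddCommGroup V] [InnerProductSpace ℝ V]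
    [DecidableEq ι] {N : ℕ}
    (u : Fin N → V) (C : Matrix (Fin N) (Fin N) ℝ) (hC : ∀ i j, C i j = ⟪u i, u j⟫)
    (y : ι → Fin N → ℝ) (a : ι → ℝ)
    (ho : ∀ i j, ∑ n, y i n * y j n = if i = j then (1 : ℝ) else 0)
    (hy : ∀ i, C.mulVec (y i) = a i • y i) (k l : ι) :
    ⟪∑ m, y k m • u m, ∑ m, y l m • u m⟫ = if k = l then a k else 0 := by
  rw [sum_inner]
  simp only [real_inner_smul_left, inner_combination u C hC (y l) (a l) (hy l)]
  have : ∑ m, y k m * (a l * y l m) = a l * ∑ m, y k m * y l m := by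
    rw [Finset.mul_sum]
    exact Finset.sum_congr rfl fun m _ => by ring
  rw [this, ho]
  split_ifs with h <;> simp [h]

/-- Row orthonormality of a square matrix implies column orthonormality. -/
lemma column_orthonormal {N : ℕ} (e : Fin N → Fin N → ℝ)
    (he : ∀ i j, ∑ n, e i n * e j n = if i = j then (1 : ℝ) else 0) (m n : Fin N) :
    ∑ k, e k m * e k n = if m = n then (1 : ℝ) else 0 := by
  have h : Matrix.of e * (Matrix.of e).transpose = 1 := by
    ext i j
    simp [Matrix.mul_apply, he, Matrix.one_apply]
  have h' := congrArg (fun M : Matrix (Fin N) (Fin N) ℝ => M m n) (mul_eq_one_comm.mp h)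
  simpa [Matrix.mul_apply, Matrix.one_apply] using h'

/-- Orthogonal recombination of the snapshots preserves every bilinear total over them. -/
lemma sum_rotated {N : ℕ} (e : Fin N → Fin N → ℝ)
    (he : ∀ i j, ∑ n, e i n * e j n = if i = j then (1 : ℝ) else 0)
    (B : Fin N → Fin N → ℝ) :
    ∑ k, ∑ m, ∑ n, e k m * e k n * B m n = ∑ n, B n n := by
  rw [Finset.sum_comm]
  refine Finset.sum_congr rfl fun m _ => ?_
  rw [Finset.sum_comm]
  simp only [← Finset.sum_mul, column_orthonormal e he]
  simp

/-- POD optimality, achieved minimum: if `C` is the correlation (Gram) matrix of snapshots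
`u_1, …, u_N` in a real inner product space, with decreasingly ordered nonnegative
eigenvalues `λ_1 ≥ … ≥ λ_N ≥ 0` realized by an orthonormal eigenbasis of `ℝ^N`, and
`v_1, …, v_r` are orthonormal eigenvectors with `C v_i = λ_i v_i` and `λ_r > 0`, then the
POD modes `φ_i = λ_i^{−1/2} Σ_n (v_i)_n u_n` satisfy
`Σ_n ‖u_n − Σ_i ⟨u_n, φ_i⟩ φ_i‖² = Σ_{k > r} λ_k`, and they achieve the minimum of the
total squared projection error over all orthonormal families of size `r`. -/
theorem pod_modes_achieve_minimum
    {V : Type*} [NormedAddCommGroup V] [InnerProductSpace ℝ V] {N : ℕ}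
    (u : Fin N → V) (C : Matrix (Fin N) (Fin N) ℝ)
    (hC : ∀ i j, C i j = ⟪u i, u j⟫)
    (lam : Fin N → ℝ) (hlam_anti : Antitone lam) (hlam_nonneg : ∀ k, 0 ≤ lam k)
    (e : Fin N → Fin N → ℝ)
    (he_orth : ∀ i j, ∑ n, e i n * e j n = if i = j then (1 : ℝ) else 0)
    (he_eig : ∀ i, C.mulVec (e i) = lam i • e i)
    (r : ℕ) (hr1 : 1 ≤ r) (hrN : r ≤ N)
    (hpos : 0 < lam (Fin.castLE hrN ⟨r - 1, by omega⟩))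
    (v : Fin r → Fin N → ℝ)
    (hv_orth : ∀ i j, ∑ n, v i n * v j n = if i = j then (1 : ℝ) else 0)
    (hv_eig : ∀ i, C.mulVec (v i) = lam (Fin.castLE hrN i) • v i)
    (φ : Fin r → V)
    (hφ : ∀ i, φ i = (Real.sqrt (lam (Fin.castLE hrN i)))⁻¹ • ∑ n, v i n • u n) :
    ∑ n, ‖u n - ∑ i, ⟪u n, φ i⟫ • φ i‖ ^ 2
        = ∑ k ∈ Finset.univ.filter (fun k : Fin N => r ≤ (k : ℕ)), lam k
    ∧ ∀ (ψ : Fin r → V), Orthonormal ℝ ψ →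
        ∑ n, ‖u n - ∑ i, ⟪u n, φ i⟫ • φ i‖ ^ 2
          ≤ ∑ n, ‖u n - ∑ i, ⟪u n, ψ i⟫ • ψ i‖ ^ 2 := by
  have hlampos : ∀ i : Fin r, 0 < lam (Fin.castLE hrN i) := fun i =>
    hpos.trans_le (hlam_anti (Fin.le_def.mpr (by simp; omega)))
  have hφu : ∀ i n, ⟪u n, φ i⟫ = √(lam (Fin.castLE hrN i)) * v i n := by
    intro i n
    rw [hφ, inner_smul_right, inner_combination u C hC (v i) _ (hv_eig i), ← mul_assoc]
    congr 1
    have h := Real.sqrt_pos.mpr (hlampos i)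
    field_simp
    exact (Real.sq_sqrt (hlampos i).le).symm
  have hφo : Orthonormal ℝ φ := by
    rw [orthonormal_iff_ite]
    intro i j
    rw [hφ i, hφ j, real_inner_smul_left, inner_smul_right,
      inner_combination_combination u C hC v _ hv_orth hv_eig]
    split_ifs with h
    · subst h
      have h := Real.sqrt_pos.mpr (hlampos i)
      field_simp
      exact (Real.sq_sqrt (hlampos i).le).symm
    · simp
  have hφcap : ∑ i, ∑ n, ⟪u n, φ i⟫ ^ 2 = ∑ i, lam (Fin.castLE hrN i) := by
    refine Finset.sum_congr rfl fun i _ => ?_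
    have h1 := hv_orth i i
    simp only [if_true] at h1
    simp only [hφu, mul_pow, Real.sq_sqrt (hlampos i).le, ← Finset.mul_sum, sq (v i _), h1,
      mul_one]
  set w : Fin N → V := fun k => ∑ m, e k m • u m with hw
  have hww : ∀ k l, ⟪w k, w l⟫ = if k = l then lam k else 0 :=
    inner_combination_combination u C hC e lam he_orth he_eig
  have htotal : ∑ n, ‖u n‖ ^ 2 = ∑ k, lam k := by
    have h := sum_rotated e he_orth fun m n => ⟪u m, u n⟫
    simp only [real_inner_self_eq_norm_sq] at h
    rw [← h]
    refine Finset.sum_congr rfl fun k _ => ?_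
    have h2 := hww k k
    simp only [if_true] at h2
    rw [← h2]
    simp only [hw, sum_inner, inner_sum, real_inner_smul_left, inner_smul_right, mul_assoc,
      Finset.mul_sum]
    refine Finset.sum_congr rfl fun m _ => Finset.sum_congr rfl fun n _ => ?_
    rw [real_inner_comm]
  have hparseval : ∀ x : V, ∑ n, ⟪u n, x⟫ ^ 2 = ∑ k, ⟪w k, x⟫ ^ 2 := by
    intro x
    have h := sum_rotated e he_orth fun m n => ⟪u m, x⟫ * ⟪u n, x⟫
    simp only [sq]
    rw [← h]
    refine Finset.sum_congr rfl fun k _ => ?_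
    simp only [hw, sum_inner, real_inner_smul_left, Finset.sum_mul_sum]
    exact Finset.sum_congr rfl fun m _ => Finset.sum_congr rfl fun n _ => by ring
  refine ⟨?_, fun ψ hψ => ?_⟩
  · rw [total_error_eq u φ hφo, hφcap, htotal]
    obtain ⟨m, rfl⟩ := Nat.exists_eq_add_of_le hrN
    rw [Finset.sum_filter, Fin.sum_univ_add, Fin.sum_univ_add]
    have hz : ∀ i : Fin r, ¬ r ≤ (i : ℕ) := fun i => by omega
    simp [hz]
    exact add_sub_cancel_left _ _
  · rw [total_error_eq u φ hφo, total_error_eq u ψ hψ, hφcap]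
    -- If `lam k = 0`, the junk value `0⁻¹ = 0` makes `f k` the zero vector.
    set f : Fin N → V := fun k => (√(lam k))⁻¹ • w k with hf
    have hff : ∀ k l, ⟪f k, f l⟫ = if k = l then (lam k)⁻¹ * lam k else 0 := by
      intro k l
      simp only [hf, real_inner_smul_left, inner_smul_right, hww]
      split_ifs with h
      · subst h
        rw [← mul_assoc, ← mul_inv, Real.mul_self_sqrt (hlam_nonneg k)]
      · simp
    have hc : ∀ k, (lam k)⁻¹ * lam k ≤ 1 := fun k => inv_mul_le_one
    have hwf : ∀ k x, ⟪w k, x⟫ ^ 2 = lam k * ⟪f k, x⟫ ^ 2 := by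
      intro k x
      simp only [hf, real_inner_smul_left, mul_pow, inv_pow, Real.sq_sqrt (hlam_nonneg k)]
      rcases eq_or_ne (lam k) 0 with h | h
      · have h2 := hww k k
        simp only [if_true, h] at h2
        rw [inner_self_eq_zero.mp h2]
        simp
      · field_simp
    have hcap : ∑ i, ∑ n, ⟪u n, ψ i⟫ ^ 2 = ∑ k, lam k * ∑ i, ⟪f k, ψ i⟫ ^ 2 := by
      simp only [hparseval, hwf, Finset.mul_sum]
      exact Finset.sum_comm
    have hle := sum_mul_le_sum_first lam (fun k => ∑ i, ⟪f k, ψ i⟫ ^ 2) hlam_anti hr1 hrN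
      hlam_nonneg (fun k => Finset.sum_nonneg fun i _ => sq_nonneg _)
      (fun k => by
        have h1 := bessel_of_orthogonal_s7 ψ (fun _ => 1) (fun _ => le_rfl)
          (fun k l => orthonormal_iff_ite.mp hψ k l) (f k)
        have h2 := hff k k
        simp only [if_true, real_inner_self_eq_norm_sq] at h2
        exact h1.trans (h2.trans_le (hc k)))
      (by
        rw [Finset.sum_comm]
        have h1 : ∀ i, ∑ k, ⟪f k, ψ i⟫ ^ 2 ≤ 1 := fun i => by
          have h := bessel_of_orthogonal_s7 f _ hc hff (ψ i)
          rw [hψ.1 i] at h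
          simpa only [real_inner_comm, one_pow] using h
        simpa using Finset.sum_le_sum fun i (_ : i ∈ Finset.univ) => h1 i)
    linarith
end
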